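/- Let n ≥ 1 and K > 1. Define a(λ) = (K/2)·(λ/(λ+1))² for λ ≥ (K−1)^{−1} and a(λ) = 0 for 0 < λ < (K−1)^{−1}, and set U(x,y) = ∫₀^∞ a(λ) u₁(x/λ, y/λ) dλ + 1/(2(K−1)) for x, y ∈ ℝⁿ. Then U admits the explicit formula: U(x,y) = ((K−1)/2)(|y|² − |x|²) + 1/(2(K−1)) if |x|+|y| ≤ (K−1)^{−1}, and U(x,y) = K|y| + (K−1)(|x|+1) − K − K(|x|+1)·log[((K−1)/K)(|x|+|y|+1)] if |x|+|y| > (K−1)^{−1}. -/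

import Mathlib

/-!
Write `a = ‖x‖`, `b = ‖y‖`, `r = a + b` and `c = (K - 1)⁻¹`. The integrand vanishes below `c`, and
for `l ≥ c` it is `(K/2) (b² - a²) / (l + 1)²` when `l ≥ r` and `(K/2) (l² - 2 a l) / (l + 1)²` when
`l < r` (`kernel_mul_uOne_of_le`, `kernel_mul_uOne_of_lt`). Both have elementary primitives, the
logarithm coming from
`l² - 2 a l = (l + 1)² - 2 (1 + a) (l + 1) + (1 + 2 a)`.
If `r ≤ c` only the tail integral `∫_c^∞` of the first expression occurs; otherwise the integral is
split at `r`, and the factorisation `b² - (a + 1)² = (b - a - 1) (r + 1)` removes the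
denominators `r + 1`.
-/

open Real MeasureTheory Set

/-- Burkholder's simple function
`u₁(x,y) = |y|² − |x|²` if `|x|+|y| ≤ 1`, and `1 − 2|x|` otherwise. -/
noncomputable def uOne {n : ℕ} (x y : EuclideanSpace ℝ (Fin n)) : ℝ :=
  if ‖x‖ + ‖y‖ ≤ 1 then ‖y‖ ^ 2 - ‖x‖ ^ 2 else 1 - 2 * ‖x‖

lemma hasDerivAt_neg_inv_add_one {t : ℝ} (ht : t + 1 ≠ 0) :
    HasDerivAt (fun l : ℝ => -(l + 1)⁻¹) (((t + 1) ^ 2)⁻¹) t := by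
  have h := (((hasDerivAt_id t).add_const 1).inv ht).neg
  refine h.congr_deriv ?_
  simp only [id]
  field_simp

lemma tendsto_neg_inv_add_one :
    Filter.Tendsto (fun l : ℝ => -(l + 1)⁻¹) Filter.atTop (nhds 0) := by
  have h : Filter.Tendsto (fun l : ℝ => l + 1) Filter.atTop Filter.atTop :=
    Filter.tendsto_atTop_add_const_right _ _ Filter.tendsto_id
  simpa using (tendsto_inv_atTop_zero.comp h).neg

lemma integrableOn_inv_sq_add_one {m : ℝ} (hm : 0 < m) :
    IntegrableOn (fun l : ℝ => ((l + 1) ^ 2)⁻¹) (Ioi m) :=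
  integrableOn_Ioi_deriv_of_nonneg'
    (fun t ht => hasDerivAt_neg_inv_add_one (by have : m ≤ t := ht; linarith))
    (fun t _ => by positivity) tendsto_neg_inv_add_one

lemma integral_inv_sq_add_one {m : ℝ} (hm : 0 < m) :
    ∫ l in Ioi m, ((l + 1) ^ 2)⁻¹ = (m + 1)⁻¹ := by
  rw [integral_Ioi_of_hasDerivAt_of_nonneg'
    (fun t ht => hasDerivAt_neg_inv_add_one (by have : m ≤ t := ht; linarith))
    (fun t _ => by positivity) tendsto_neg_inv_add_one]
  ring

lemma hasDerivAt_middle (a : ℝ) {t : ℝ} (ht : t + 1 ≠ 0) :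
    HasDerivAt (fun l : ℝ => l - 2 * (1 + a) * log (l + 1) - (1 + 2 * a) * (l + 1)⁻¹)
      ((t ^ 2 - 2 * a * t) / (t + 1) ^ 2) t := by
  have h1 := (hasDerivAt_id t).add_const 1
  have h := ((hasDerivAt_id t).sub ((h1.log ht).const_mul (2 * (1 + a)))).sub
    ((h1.inv ht).const_mul (1 + 2 * a))
  refine h.congr_deriv ?_
  simp only [id]
  field_simp
  ring

lemma continuousOn_middle (a : ℝ) {c r : ℝ} (hc : 0 < c) :
    ContinuousOn (fun l : ℝ => (l ^ 2 - 2 * a * l) / (l + 1) ^ 2) (Icc c r) := by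
  refine ContinuousOn.div (by fun_prop) (by fun_prop) fun t ht => ?_
  have : 0 < t := hc.trans_le ht.1
  positivity

lemma integral_middle (a : ℝ) {c r : ℝ} (hc : 0 < c) (hcr : c ≤ r) :
    ∫ l in Ioc c r, (l ^ 2 - 2 * a * l) / (l + 1) ^ 2 =
      (r - 2 * (1 + a) * log (r + 1) - (1 + 2 * a) * (r + 1)⁻¹) -
        (c - 2 * (1 + a) * log (c + 1) - (1 + 2 * a) * (c + 1)⁻¹) := by
  rw [← intervalIntegral.integral_of_le hcr]
  refine intervalIntegral.integral_eq_sub_of_hasDerivAt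
    (f := fun l : ℝ => l - 2 * (1 + a) * log (l + 1) - (1 + 2 * a) * (l + 1)⁻¹)
    (fun t ht => ?_) ?_
  · rw [uIcc_of_le hcr] at ht
    exact hasDerivAt_middle a (by linarith [ht.1])
  · apply ContinuousOn.intervalIntegrable
    rw [uIcc_of_le hcr]
    exact continuousOn_middle a hc

lemma norm_add_norm_inv_smul_le_one_iff {n : ℕ} (x y : EuclideanSpace ℝ (Fin n)) {l : ℝ}
    (hl : 0 < l) : ‖l⁻¹ • x‖ + ‖l⁻¹ • y‖ ≤ 1 ↔ ‖x‖ + ‖y‖ ≤ l := by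
  rw [norm_smul, norm_smul, norm_inv, norm_of_nonneg hl.le, ← mul_add, inv_mul_le_one₀ hl]

lemma kernel_mul_uOne_of_le {n : ℕ} (x y : EuclideanSpace ℝ (Fin n)) (K : ℝ) {l : ℝ}
    (hl : 0 < l) (h : ‖x‖ + ‖y‖ ≤ l) :
    K / 2 * (l / (l + 1)) ^ 2 * uOne (l⁻¹ • x) (l⁻¹ • y) =
      K / 2 * (‖y‖ ^ 2 - ‖x‖ ^ 2) * ((l + 1) ^ 2)⁻¹ := by
  rw [uOne, if_pos ((norm_add_norm_inv_smul_le_one_iff x y hl).2 h), norm_smul, norm_smul,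
    norm_inv, norm_of_nonneg hl.le]
  field_simp

lemma kernel_mul_uOne_of_lt {n : ℕ} (x y : EuclideanSpace ℝ (Fin n)) (K : ℝ) {l : ℝ}
    (hl : 0 < l) (h : l < ‖x‖ + ‖y‖) :
    K / 2 * (l / (l + 1)) ^ 2 * uOne (l⁻¹ • x) (l⁻¹ • y) =
      K / 2 * ((l ^ 2 - 2 * ‖x‖ * l) / (l + 1) ^ 2) := by
  rw [uOne, if_neg (fun h' => h.not_ge ((norm_add_norm_inv_smul_le_one_iff x y hl).1 h')),
    norm_smul, norm_inv, norm_of_nonneg hl.le]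
  field_simp

/-- The cut-off in the weight restricts the domain of integration; the endpoint `c` is null. -/
lemma integral_cutoff {c : ℝ} (hc : 0 < c) (w f : ℝ → ℝ) :
    ∫ l in Ioi (0 : ℝ), (if c ≤ l then w l else 0) * f l = ∫ l in Ioi c, w l * f l := by
  have h : (fun l => (if c ≤ l then w l else 0) * f l) =
      (Ici c).indicator fun l => w l * f l := by
    ext l
    by_cases hl : c ≤ l <;> simp [indicator, hl]
  rw [h, setIntegral_indicator measurableSet_Ici,
    inter_eq_right.2 (Ici_subset_Ioi.2 hc), integral_Ici_eq_integral_Ioi]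

lemma integral_tail {n : ℕ} (x y : EuclideanSpace ℝ (Fin n)) (K : ℝ) {m : ℝ}
    (hm : 0 < m) (h : ‖x‖ + ‖y‖ ≤ m) :
    ∫ l in Ioi m, K / 2 * (l / (l + 1)) ^ 2 * uOne (l⁻¹ • x) (l⁻¹ • y) =
      K / 2 * (‖y‖ ^ 2 - ‖x‖ ^ 2) * (m + 1)⁻¹ := by
  rw [setIntegral_congr_fun measurableSet_Ioi fun l (hl : m < l) =>
    kernel_mul_uOne_of_le x y K (hm.trans hl) (h.trans hl.le),
    integral_const_mul, integral_inv_sq_add_one hm]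

/-- Explicit formula for `U(x,y) = ∫₀^∞ a(λ) u₁(x/λ, y/λ) dλ + 1/(2(K−1))`, where
`a(λ) = (K/2)(λ/(λ+1))²` for `λ ≥ (K−1)⁻¹` and `a(λ) = 0` for `0 < λ < (K−1)⁻¹`. -/
theorem stmt_9 (n : ℕ) (hn : 1 ≤ n) (K : ℝ) (hK : 1 < K)
    (x y : EuclideanSpace ℝ (Fin n)) :
    (∫ l in Ioi (0 : ℝ),
        (if (K - 1)⁻¹ ≤ l then (K / 2) * (l / (l + 1)) ^ 2 else 0) *
          uOne (l⁻¹ • x) (l⁻¹ • y)) + 1 / (2 * (K - 1))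
      = if ‖x‖ + ‖y‖ ≤ (K - 1)⁻¹ then
          ((K - 1) / 2) * (‖y‖ ^ 2 - ‖x‖ ^ 2) + 1 / (2 * (K - 1))
        else
          K * ‖y‖ + (K - 1) * (‖x‖ + 1) - K -
            K * (‖x‖ + 1) * Real.log ((K - 1) / K * (‖x‖ + ‖y‖ + 1)) := by
  have hK1 : 0 < K - 1 := sub_pos.2 hK
  have hK0 : 0 < K := by linarith
  have hc : 0 < (K - 1)⁻¹ := inv_pos.2 hK1
  have hc1 : (K - 1)⁻¹ + 1 = K / (K - 1) := by field_simp; ring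
  rw [integral_cutoff hc (fun l => K / 2 * (l / (l + 1)) ^ 2)
    (fun l => uOne (l⁻¹ • x) (l⁻¹ • y))]
  split_ifs with h
  · rw [integral_tail x y K hc h, hc1]
    field_simp
  · have hr : (K - 1)⁻¹ < ‖x‖ + ‖y‖ := not_le.1 h
    have hr0 : 0 < ‖x‖ + ‖y‖ := hc.trans hr
    have hr1 : 0 < ‖x‖ + ‖y‖ + 1 := by linarith
    -- The two expressions for the integrand agree only up to the null set `{r}`.
    have hmid : (fun l => K / 2 * (l / (l + 1)) ^ 2 * uOne (l⁻¹ • x) (l⁻¹ • y))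
        =ᵐ[volume.restrict (Ioc (K - 1)⁻¹ (‖x‖ + ‖y‖))]
        fun l => K / 2 * ((l ^ 2 - 2 * ‖x‖ * l) / (l + 1) ^ 2) := by
      rw [← Measure.restrict_congr_set Ioo_ae_eq_Ioc]
      exact (ae_restrict_mem measurableSet_Ioo).mono fun l hl =>
        kernel_mul_uOne_of_lt x y K (hc.trans hl.1) hl.2
    have hint1 : IntegrableOn
        (fun l => K / 2 * (l / (l + 1)) ^ 2 * uOne (l⁻¹ • x) (l⁻¹ • y))
        (Ioc (K - 1)⁻¹ (‖x‖ + ‖y‖)) :=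
      Integrable.congr ((((continuousOn_middle ‖x‖ hc).integrableOn_Icc).mono_set
        Ioc_subset_Icc_self).const_mul (K / 2)) hmid.symm
    have hint2 : IntegrableOn
        (fun l => K / 2 * (l / (l + 1)) ^ 2 * uOne (l⁻¹ • x) (l⁻¹ • y))
        (Ioi (‖x‖ + ‖y‖)) :=
      IntegrableOn.congr_fun
        ((integrableOn_inv_sq_add_one hr0).const_mul (K / 2 * (‖y‖ ^ 2 - ‖x‖ ^ 2)))
        (fun l (hl : _ < l) => (kernel_mul_uOne_of_le x y K (hr0.trans hl) hl.le).symm)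
        measurableSet_Ioi
    rw [← Ioc_union_Ioi_eq_Ioi hr.le,
      setIntegral_union (Ioc_disjoint_Ioi le_rfl) measurableSet_Ioi hint1 hint2,
      integral_congr_ae hmid, integral_const_mul, integral_middle ‖x‖ hc hr.le,
      integral_tail x y K hr0 le_rfl, hc1]
    have hlog : log ((K - 1) / K * (‖x‖ + ‖y‖ + 1)) =
        log (‖x‖ + ‖y‖ + 1) - log (K / (K - 1)) := by
      rw [← log_div hr1.ne' (by positivity)]
      congr 1
      field_simp
    rw [hlog]
    field_simp
    ring
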